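/- Let D be an integer with D > (576 log 2)³ + 3 and σ, R > 0 with R² > σ²(D−1). Set s⋆ = √(R² − σ²(D−3)), ν² = σ⁴(D−3)/(2s⋆²), ν̄ = √(ν² + σ²), and C(D) = ((D−3)/2)^{(D−3)/2} e^{−(D−3)/2} / Γ((D−1)/2). Suppose 576 log(2) · σ² D^{2/3} ≤ s⋆² ≤ 3σ²D. Then the convolution [φ ∗ h](s) satisfies: (i) [φ ∗ h](s) ≥ (1/(64e²)) · C(D) · s⋆ν/σ² for all 0 ≤ s ≤ s⋆ + ν̄, and (ii) [φ ∗ h](s) ≥ (1/(64e)) · C(D) · (s⋆ν/σ²) · (ν̄/(s − s⋆)) · exp(−(s−s⋆)²/(2(ν²+σ²))) for all s⋆ + ν̄ ≤ s ≤ s⋆ + (1/12) σ (D−3)^{1/6}. -/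

import Mathlib

/-!
After rescaling to `σ = 1`, write `S = s⋆`, `N = ν`, `B = ν̄`, `p = (D - 3) ^ (1 / 6)` and
`k = (D - 3) / 2`. The density `t ^ k * exp (-t)` has its mode at `k`, and the upper limit in
`h(S + x)` lies below that mode by `a = S x + x² / 2`.

Keeping only the slice of the integral between the limits belonging to `S + u + l` and `S + u`, and
expanding the logarithm of the density at its mode, gives
`h(S + u) ≳ C(D) S l exp(-(u + l)² / (2 N²))` for every `l ≥ 0`; the error in the exponent is
bounded for `u + l` of order `p`, because `S² ≤ 3 D`.

In the convolution at `S + y`, the exponent `(y - u)² / 2 + u² / (2 N²)` has the minimum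
`y² / (2 B²)`, attained at `u = N² y / B²`. Only an interval of length `N / B` to the right of this
point is kept, with `l = N B / y`; there the exponent exceeds the minimum by at most `3`. Since
`h` is even and decreasing in `|s|`, the same window serves every `0 ≤ s ≤ S + y`: part (i) is the
case `y = B`, part (ii) the case `y = s - S`.
-/

open MeasureTheory

/-- `h(s) = (1/Γ((D-1)/2)) ∫₀^{max{0,(R²-s²)/(2σ²)}} t^((D-3)/2) e^(-t) dt`, the
probability that a chi-square random variable with `D-1` degrees of freedom is at
most `(R² - s²)/σ²`. -/
noncomputable def hFun (D : ℕ) (σ R : ℝ) (s : ℝ) : ℝ :=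
  (1 / Real.Gamma (((D : ℝ) - 1) / 2)) *
    ∫ t in (0 : ℝ)..(max 0 ((R ^ 2 - s ^ 2) / (2 * σ ^ 2))),
      t ^ (((D : ℝ) - 3) / 2) * Real.exp (-t)

/-- The centered Gaussian density with standard deviation `σ`. -/
noncomputable def gaussPdf (σ : ℝ) (v : ℝ) : ℝ :=
  (1 / (Real.sqrt (2 * Real.pi) * σ)) * Real.exp (-v ^ 2 / (2 * σ ^ 2))

/-- Convolution `[φ ∗ f](t) = ∫ φ(v) f(t - v) dv` with the Gaussian density. -/
noncomputable def gaussConv (σ : ℝ) (f : ℝ → ℝ) (t : ℝ) : ℝ :=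
  ∫ v : ℝ, gaussPdf σ v * f (t - v)

/-- `C(D) = ((D-3)/2)^((D-3)/2) e^(-(D-3)/2) / Γ((D-1)/2)`. -/
noncomputable def CofD (D : ℕ) : ℝ :=
  (((D : ℝ) - 3) / 2) ^ (((D : ℝ) - 3) / 2) * Real.exp (-(((D : ℝ) - 3) / 2)) /
    Real.Gamma (((D : ℝ) - 1) / 2)

/-! ### The density `t ^ k * exp (-t)` -/

lemma intervalIntegrable_rpow_mul_exp_neg {k : ℝ} (hk : -1 < k) (a b : ℝ) :
    IntervalIntegrable (fun t : ℝ ↦ t ^ k * Real.exp (-t)) volume a b :=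
  (intervalIntegral.intervalIntegrable_rpow' hk).mul_continuousOn (by fun_prop)

lemma monotoneOn_rpow_mul_exp_neg (k : ℝ) :
    MonotoneOn (fun t : ℝ ↦ t ^ k * Real.exp (-t)) (Set.Ioc 0 k) := by
  intro t ht t' ht' htt'
  have ht₀ : 0 < t := ht.1
  have ht₀' : 0 < t' := ht'.1
  have hk : 0 ≤ k := ht₀.le.trans ht.2
  have hratio : (t / t') ^ k ≤ Real.exp (t - t') :=
    calc (t / t') ^ k ≤ Real.exp (t / t' - 1) ^ k := by
          gcongr
          linarith [Real.add_one_le_exp (t / t' - 1)]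
      _ = Real.exp (k / t' * (t - t')) := by
          rw [← Real.exp_mul]
          congr 1
          field_simp
      _ ≤ Real.exp (t - t') := by
          have : 1 ≤ k / t' := (one_le_div ht₀').mpr ht'.2
          gcongr
          nlinarith
  calc t ^ k * Real.exp (-t) = t' ^ k * ((t / t') ^ k * Real.exp (-t)) := by
        rw [Real.div_rpow ht₀.le ht₀'.le]
        field_simp
    _ ≤ t' ^ k * (Real.exp (t - t') * Real.exp (-t)) := by gcongr
    _ = t' ^ k * Real.exp (-t') := by
        rw [← Real.exp_add]
        ring_nf

lemma sub_mul_le_integral_rpow_mul_exp_neg {k b c : ℝ} (hc : 0 < c) (hcb : c ≤ b) (hbk : b ≤ k) :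
    (b - c) * (c ^ k * Real.exp (-c)) ≤ ∫ t in (0 : ℝ)..b, t ^ k * Real.exp (-t) := by
  have hint := intervalIntegrable_rpow_mul_exp_neg (k := k) (by linarith)
  calc (b - c) * (c ^ k * Real.exp (-c)) = ∫ _ in c..b, c ^ k * Real.exp (-c) := by
        rw [intervalIntegral.integral_const, smul_eq_mul]
    _ ≤ ∫ t in c..b, t ^ k * Real.exp (-t) :=
        intervalIntegral.integral_mono_on hcb intervalIntegrable_const (hint c b) fun t ht ↦
          monotoneOn_rpow_mul_exp_neg k ⟨hc, hcb.trans hbk⟩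
            ⟨hc.trans_le ht.1, ht.2.trans hbk⟩ ht.1
    _ ≤ ∫ t in (0 : ℝ)..b, t ^ k * Real.exp (-t) := by
        refine intervalIntegral.integral_mono_interval hc.le hcb le_rfl ?_ (hint 0 b)
        filter_upwards [ae_restrict_mem measurableSet_Ioc] with t ht
        exact mul_nonneg (Real.rpow_nonneg ht.1.le k) (Real.exp_pos _).le

lemma neg_sub_sq_sub_cube_le_log_one_sub {z : ℝ} (hz : 0 ≤ z) (hz' : z ≤ 1 / 2) :
    -z - z ^ 2 / 2 - 2 * z ^ 3 ≤ Real.log (1 - z) := by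
  have htaylor := Real.abs_log_sub_add_sum_range_le (x := z) (by rw [abs_of_nonneg hz]; linarith) 2
  rw [abs_of_nonneg hz] at htaylor
  norm_num [Finset.sum_range_succ] at htaylor
  have hremainder : z ^ 3 / (1 - z) ≤ 2 * z ^ 3 := by
    rw [div_le_iff₀ (by linarith)]
    nlinarith [pow_nonneg hz 3]
  linarith [(abs_le.mp htaylor).1]

lemma mul_exp_le_sub_rpow_mul_exp_neg {k a : ℝ} (hk : 0 < k) (ha : 0 ≤ a) (hak : a ≤ k / 2) :
    k ^ k * Real.exp (-k) * Real.exp (-(a ^ 2 / (2 * k) + 2 * a ^ 3 / k ^ 2)) ≤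
      (k - a) ^ k * Real.exp (-(k - a)) := by
  obtain ⟨z, rfl⟩ : ∃ z, a = k * z := ⟨a / k, by field_simp⟩
  have hz : 0 ≤ z := nonneg_of_mul_nonneg_right ha hk
  have hz' : z ≤ 1 / 2 := le_of_mul_le_mul_left (by linarith) hk
  have hz1 : 0 < 1 - z := by linarith
  calc k ^ k * Real.exp (-k) * Real.exp (-((k * z) ^ 2 / (2 * k) + 2 * (k * z) ^ 3 / k ^ 2))
      = k ^ k * Real.exp (k * (-z - z ^ 2 / 2 - 2 * z ^ 3)) * Real.exp (-(k - k * z)) := by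
        rw [mul_assoc, mul_assoc, ← Real.exp_add, ← Real.exp_add]
        congr 2
        field_simp
        ring
    _ ≤ k ^ k * Real.exp (k * Real.log (1 - z)) * Real.exp (-(k - k * z)) := by
        gcongr
        exact neg_sub_sq_sub_cube_le_log_one_sub hz hz'
    _ = (k - k * z) ^ k * Real.exp (-(k - k * z)) := by
        rw [mul_comm k (Real.log _), ← Real.rpow_def_of_pos hz1, ← Real.mul_rpow hk.le hz1.le,
          mul_one_sub]

/-! ### The tail probability `h` and its Gaussian convolution -/

section HFun

variable {D : ℕ}

lemma Gamma_sub_one_half_pos (hD : 1 < D) : 0 < Real.Gamma (((D : ℝ) - 1) / 2) := by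
  have : (1 : ℝ) < D := by exact_mod_cast hD
  exact Real.Gamma_pos_of_pos (by linarith)

lemma CofD_pos (hD : 3 < D) : 0 < CofD D := by
  have : (3 : ℝ) < D := by exact_mod_cast hD
  have := Gamma_sub_one_half_pos (D := D) (by omega)
  unfold CofD
  positivity

lemma intervalIntegrable_hFun_integrand (hD : 1 < D) (a b : ℝ) :
    IntervalIntegrable (fun t : ℝ ↦ t ^ (((D : ℝ) - 3) / 2) * Real.exp (-t)) volume a b := by
  have : (1 : ℝ) < D := by exact_mod_cast hD
  exact intervalIntegrable_rpow_mul_exp_neg (by linarith) a b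

lemma hFun_nonneg (hD : 1 < D) (σ R s : ℝ) : 0 ≤ hFun D σ R s := by
  have := Gamma_sub_one_half_pos hD
  refine mul_nonneg (by positivity)
    (intervalIntegral.integral_nonneg (le_max_left _ _) fun t ht ↦ ?_)
  exact mul_nonneg (Real.rpow_nonneg ht.1 _) (Real.exp_pos _).le

lemma hFun_le_hFun_of_abs_le (hD : 1 < D) (σ R : ℝ) {s s' : ℝ} (h : |s| ≤ |s'|) :
    hFun D σ R s' ≤ hFun D σ R s := by
  have := Gamma_sub_one_half_pos hD
  have hsq : s ^ 2 ≤ s' ^ 2 := sq_le_sq.mpr h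
  refine mul_le_mul_of_nonneg_left ?_ (by positivity)
  refine intervalIntegral.integral_mono_interval le_rfl (le_max_left _ _) (by gcongr) ?_
    (intervalIntegrable_hFun_integrand hD _ _)
  filter_upwards [ae_restrict_mem measurableSet_Ioc] with t ht
  exact mul_nonneg (Real.rpow_nonneg ht.1.le _) (Real.exp_pos _).le

lemma continuous_hFun (hD : 1 < D) (σ R : ℝ) : Continuous (hFun D σ R) := by
  have hprim := intervalIntegral.continuous_primitive (μ := volume)
    (intervalIntegrable_hFun_integrand hD) 0
  exact continuous_const.mul (hprim.comp (by fun_prop))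

lemma sub_mul_div_Gamma_le_hFun {σ R s c : ℝ} (hc : 0 < c)
    (hcs : c ≤ (R ^ 2 - s ^ 2) / (2 * σ ^ 2))
    (hs : (R ^ 2 - s ^ 2) / (2 * σ ^ 2) ≤ ((D : ℝ) - 3) / 2) :
    ((R ^ 2 - s ^ 2) / (2 * σ ^ 2) - c) * (c ^ (((D : ℝ) - 3) / 2) * Real.exp (-c)) /
      Real.Gamma (((D : ℝ) - 1) / 2) ≤ hFun D σ R s := by
  have := Real.Gamma_pos_of_pos (s := ((D : ℝ) - 1) / 2) (by linarith)
  rw [hFun, max_eq_right (hc.le.trans hcs), one_div_mul_eq_div]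
  gcongr
  exact sub_mul_le_integral_rpow_mul_exp_neg hc hcs hs

lemma hFun_const_mul {σ : ℝ} (hσ : σ ≠ 0) (R s : ℝ) :
    hFun D σ R (σ * s) = hFun D 1 (R / σ) s := by
  have : (R ^ 2 - (σ * s) ^ 2) / (2 * σ ^ 2) = ((R / σ) ^ 2 - s ^ 2) / (2 * 1 ^ 2) := by
    field_simp
  rw [hFun, hFun, this]

lemma gaussPdf_eq_gaussianPDFReal {σ : ℝ} (hσ : 0 ≤ σ) :
    gaussPdf σ = ProbabilityTheory.gaussianPDFReal 0 (σ.toNNReal ^ 2) := by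
  ext v
  simp [gaussPdf, ProbabilityTheory.gaussianPDFReal, hσ]

lemma gaussPdf_nonneg {σ : ℝ} (hσ : 0 ≤ σ) (v : ℝ) : 0 ≤ gaussPdf σ v := by
  rw [gaussPdf_eq_gaussianPDFReal hσ]
  exact ProbabilityTheory.gaussianPDFReal_nonneg _ _ v

lemma integrable_gaussPdf {σ : ℝ} (hσ : 0 ≤ σ) : Integrable (gaussPdf σ) := by
  rw [gaussPdf_eq_gaussianPDFReal hσ]
  exact ProbabilityTheory.integrable_gaussianPDFReal _ _

lemma integrable_gaussPdf_mul_hFun (hD : 1 < D) {σ : ℝ} (hσ : 0 ≤ σ) (τ R s : ℝ) :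
    Integrable fun v ↦ gaussPdf σ v * hFun D τ R (s - v) := by
  refine (integrable_gaussPdf hσ).mul_bdd (c := hFun D τ R 0)
    ((continuous_hFun hD τ R).comp (by fun_prop)).aestronglyMeasurable (.of_forall fun v ↦ ?_)
  rw [Real.norm_of_nonneg (hFun_nonneg hD _ _ _)]
  exact hFun_le_hFun_of_abs_le hD τ R (by simp)

lemma gaussConv_eq_gaussConv_one {σ : ℝ} (hσ : 0 < σ) (f : ℝ → ℝ) (s : ℝ) :
    gaussConv σ f s = gaussConv 1 (fun w ↦ f (σ * w)) (s / σ) := by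
  have hscale := Measure.integral_comp_div (fun v ↦ gaussPdf 1 v * f (s - σ * v)) σ
  rw [abs_of_pos hσ, smul_eq_mul] at hscale
  have hpdf (v : ℝ) : gaussPdf σ v = σ⁻¹ * gaussPdf 1 (v / σ) := by
    simp only [gaussPdf]
    field_simp
  calc gaussConv σ f s
      = ∫ v, σ⁻¹ * (gaussPdf 1 (v / σ) * f (s - σ * (v / σ))) := by
        simp only [gaussConv, hpdf, mul_div_cancel₀ _ hσ.ne', mul_assoc]
    _ = ∫ v, gaussPdf 1 v * f (s - σ * v) := by
        rw [integral_const_mul, hscale, inv_mul_cancel_left₀ hσ.ne']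
    _ = gaussConv 1 (fun w ↦ f (σ * w)) (s / σ) := by
        simp only [gaussConv, mul_sub, mul_div_cancel₀ _ hσ.ne']

lemma gaussConv_hFun_eq {σ : ℝ} (hσ : 0 < σ) (R s : ℝ) :
    gaussConv σ (hFun D σ R) s = gaussConv 1 (hFun D 1 (R / σ)) (s / σ) := by
  simp only [gaussConv_eq_gaussConv_one hσ, hFun_const_mul hσ.ne']

lemma sub_mul_le_integral_of_forall_Icc_le {f : ℝ → ℝ} {a b K : ℝ} (hf : Integrable f)
    (hf₀ : 0 ≤ f) (hab : a ≤ b) (hK : ∀ v ∈ Set.Icc a b, K ≤ f v) : (b - a) * K ≤ ∫ v, f v :=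
  calc (b - a) * K = K * volume.real (Set.Icc a b) := by
        rw [Real.volume_real_Icc_of_le hab, mul_comm]
    _ ≤ ∫ v in Set.Icc a b, f v :=
        setIntegral_ge_of_const_le_real measurableSet_Icc (by simp) hK hf.integrableOn
    _ ≤ ∫ v, f v := setIntegral_le_integral hf (.of_forall hf₀)

end HFun

/-! ### Exponents and constants -/

lemma sub_sq_div_two_add_sq_div {N B : ℝ} (hN : N ≠ 0) (hB : B ≠ 0) (hBN : B ^ 2 = N ^ 2 + 1)
    (y u : ℝ) :
    (y - u) ^ 2 / 2 + u ^ 2 / (2 * N ^ 2) =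
      y ^ 2 / (2 * B ^ 2) + ((u - N ^ 2 * y / B ^ 2) / (N / B)) ^ 2 / 2 := by
  field_simp
  rw [hBN]
  ring

lemma sub_sq_div_two_add_add_sq_div_le {N B y u : ℝ} (hN : 0 < N) (hB : 0 < B)
    (hBN : B ^ 2 = N ^ 2 + 1) (hBy : B ≤ y)
    (hu : u ∈ Set.Icc (N ^ 2 * y / B ^ 2) (N ^ 2 * y / B ^ 2 + N / B)) :
    (y - u) ^ 2 / 2 + (u + N * B / y) ^ 2 / (2 * N ^ 2) ≤ y ^ 2 / (2 * B ^ 2) + 5 / 2 := by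
  obtain ⟨hu₁, hu₂⟩ := hu
  have hy : 0 < y := hB.trans_le hBy
  have hsquare : ((u - N ^ 2 * y / B ^ 2) / (N / B)) ^ 2 ≤ 1 := by
    refine pow_le_one₀ (div_nonneg (by linarith) (by positivity)) ?_
    rw [div_le_one (by positivity)]
    linarith
  have hshift : (B / y) ^ 2 ≤ 1 := pow_le_one₀ (by positivity) ((div_le_one hy).mpr hBy)
  have hcross : u * (B / y) / N ≤ 3 / 2 :=
    calc u * (B / y) / N ≤ (N ^ 2 * y / B ^ 2 + N / B) * (B / y) / N := by gcongr
      _ = N / B + 1 / y := by field_simp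
      _ ≤ N / B + 1 / B := by gcongr
      _ ≤ 3 / 2 := by
          rw [← add_div, div_le_iff₀ hB]
          refine le_of_sq_le_sq ?_ (by positivity)
          rw [mul_pow, hBN]
          linarith [sq_nonneg (N - 1), sq_nonneg N]
  have hexpand : (u + N * B / y) ^ 2 / (2 * N ^ 2) =
      u ^ 2 / (2 * N ^ 2) + u * (B / y) / N + (B / y) ^ 2 / 2 := by
    field_simp
    ring
  linarith [sub_sq_div_two_add_sq_div hN.ne' hB.ne' hBN y u]

lemma inv_mul_exp_one_le : 1 / (64 * Real.exp 1) ≤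
    0.377 * (1 / Real.sqrt (2 * Real.pi)) * Real.exp (-3) := by
  have hsqrt : Real.sqrt (2 * Real.pi) ≤ 2.51 := by
    rw [Real.sqrt_le_left (by norm_num)]
    linarith [Real.pi_lt_d2]
  have hexp : Real.exp 1 ^ 2 ≤ 0.377 * (1 / 2.51) * 64 :=
    calc Real.exp 1 ^ 2 ≤ 2.7182818286 ^ 2 := by gcongr; exact Real.exp_one_lt_d9.le
      _ ≤ 0.377 * (1 / 2.51) * 64 := by norm_num
  have hexp_neg : Real.exp (-3) = 1 / Real.exp 1 ^ 3 := by
    rw [Real.exp_neg, ← Real.exp_nat_mul]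
    norm_num
  calc 1 / (64 * Real.exp 1) = Real.exp 1 ^ 2 / 64 * (1 / Real.exp 1 ^ 3) := by field_simp
    _ ≤ 0.377 * (1 / 2.51) * (1 / Real.exp 1 ^ 3) := by gcongr; linarith
    _ ≤ 0.377 * (1 / Real.sqrt (2 * Real.pi)) * Real.exp (-3) := by rw [hexp_neg]; gcongr

/-! ### The rescaled parameters -/

/-- The distance `S x + x² / 2` by which the upper limit `(R² - (S + x)²) / 2` of the integral
defining `h(S + x)` (for `σ = 1`) lies below its value at `x = 0`. For `S = s⋆` the latter is the
mode of the integrand. -/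
noncomputable def modeGap (S x : ℝ) : ℝ := S * x + x ^ 2 / 2

lemma modeGap_nonneg {S x : ℝ} (hS : 0 ≤ S) (hx : 0 ≤ x) : 0 ≤ modeGap S x := by
  unfold modeGap
  positivity

lemma mul_le_modeGap_add_sub {S u l : ℝ} (hu : 0 ≤ u) (hl : 0 ≤ l) :
    S * l ≤ modeGap S (u + l) - modeGap S u := by
  unfold modeGap
  nlinarith [mul_nonneg hu hl, sq_nonneg l]

/-- The quantities `p = (D - 3)^(1/6)`, `S = s⋆`, `N = ν`, `B = ν̄` of the theorem for `σ = 1`,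
given by their defining relations together with the numerical bounds that the two-sided condition
on `s⋆²` provides. -/
structure IsRescaling (D : ℕ) (R p S N B : ℝ) : Prop where
  le_p : 11.5 ≤ p
  S_pos : 0 < S
  N_pos : 0 < N
  B_pos : 0 < B
  p_pow_six : p ^ 6 = (D : ℝ) - 3
  R_sq : R ^ 2 = S ^ 2 + p ^ 6
  two_mul_S_sq_mul_N_sq : 2 * S ^ 2 * N ^ 2 = p ^ 6
  B_sq : B ^ 2 = N ^ 2 + 1
  le_S_sq : 399 * p ^ 4 ≤ S ^ 2
  S_sq_le : S ^ 2 ≤ 3 * p ^ 6 + 9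

namespace IsRescaling

variable {D : ℕ} {R p S N B : ℝ}

lemma p_pos (h : IsRescaling D R p S N B) : 0 < p := by linarith [h.le_p]

lemma three_lt (h : IsRescaling D R p S N B) : 3 < D := by
  have := h.p_pow_six
  have := pow_pos h.p_pos 6
  exact_mod_cast (by linarith : (3 : ℝ) < D)

lemma le_p_sq (h : IsRescaling D R p S N B) : 132 ≤ p ^ 2 := by
  nlinarith [h.le_p]

lemma le_p_pow_six (h : IsRescaling D R p S N B) : 10 ^ 6 ≤ p ^ 6 := by
  have := h.le_p
  gcongr
  linarith

lemma N_sq_le (h : IsRescaling D R p S N B) : 798 * N ^ 2 ≤ p ^ 2 := by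
  have hp := h.p_pos
  refine le_of_mul_le_mul_left (a := p ^ 4) ?_ (by positivity)
  calc p ^ 4 * (798 * N ^ 2) = 2 * (399 * p ^ 4) * N ^ 2 := by ring
    _ ≤ 2 * S ^ 2 * N ^ 2 := by gcongr; exact h.le_S_sq
    _ = p ^ 4 * p ^ 2 := by rw [h.two_mul_S_sq_mul_N_sq]; ring

lemma N_le (h : IsRescaling D R p S N B) : N ≤ p / 28 := by
  have hp := h.p_pos
  exact le_of_sq_le_sq (by linarith [h.N_sq_le, sq_nonneg N]) (by positivity)

lemma one_le_B (h : IsRescaling D R p S N B) : 1 ≤ B :=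
  le_of_sq_le_sq (by linarith [h.B_sq, sq_nonneg N]) h.B_pos.le

lemma B_le (h : IsRescaling D R p S N B) : B ≤ p / 10 := by
  have hp := h.p_pos
  exact le_of_sq_le_sq (by linarith [h.B_sq, h.N_sq_le, h.le_p_sq]) (by positivity)

lemma p_le_S (h : IsRescaling D R p S N B) : p ≤ S := by
  refine le_of_sq_le_sq ?_ h.S_pos.le
  nlinarith [h.le_S_sq, h.le_p_sq]

lemma S_le (h : IsRescaling D R p S N B) : S ≤ 1.74 * p ^ 3 := by
  have hp := h.p_pos
  exact le_of_sq_le_sq (by linarith [h.S_sq_le, h.le_p_pow_six]) (by positivity)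

lemma le_N_div_B (h : IsRescaling D R p S N B) : 0.377 ≤ N / B := by
  have hNsq : 1 / 6.01 ≤ N ^ 2 := by
    have hp : p ^ 6 ≤ 2 * (3 * p ^ 6 + 9) * N ^ 2 := by
      rw [← h.two_mul_S_sq_mul_N_sq]
      gcongr
      rw [h.two_mul_S_sq_mul_N_sq]
      exact h.S_sq_le
    by_contra! hlt
    nlinarith [h.le_p_pow_six]
  rw [le_div_iff₀ h.B_pos]
  refine le_of_sq_le_sq ?_ h.N_pos.le
  rw [mul_pow, h.B_sq]
  linarith

lemma window_le (h : IsRescaling D R p S N B) {y u : ℝ} (hBy : B ≤ y) (hyp : y ≤ p / 10)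
    (hu : u ≤ N ^ 2 * y / B ^ 2 + N / B) : u + N * B / y ≤ 0.172 * p := by
  have hN := h.N_pos
  have hB := h.B_pos
  have hy : 0 < y := hB.trans_le hBy
  have hcentre : N ^ 2 * y / B ^ 2 ≤ y := by
    rw [div_le_iff₀ (by positivity)]
    nlinarith [h.B_sq]
  have hlength : N / B ≤ N := div_le_self hN.le h.one_le_B
  have hshift : N * B / y ≤ N := by
    rw [div_le_iff₀ hy]
    gcongr
  linarith [h.N_le, h.p_pos]

lemma modeGap_le (h : IsRescaling D R p S N B) {x : ℝ} (hx₀ : 0 ≤ x) (hx : x ≤ 0.172 * p) :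
    modeGap S x ≤ 0.3 * p ^ 4 := by
  have hp := h.p_pos
  have hlinear : S * x ≤ 1.74 * p ^ 3 * (0.172 * p) := by
    gcongr
    exact h.S_le
  have hsquare : x ^ 2 ≤ (0.172 * p) ^ 2 := by gcongr
  have hp4 : 132 * p ^ 2 ≤ p ^ 4 := by nlinarith [h.le_p_sq]
  unfold modeGap
  linarith [pow_pos hp 4]

lemma modeGap_le_p_pow_six (h : IsRescaling D R p S N B) {x : ℝ} (hx₀ : 0 ≤ x)
    (hx : x ≤ 0.172 * p) : modeGap S x ≤ p ^ 6 / 4 := by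
  have hp := h.p_pos
  have hp6 : 132 * p ^ 4 ≤ p ^ 6 := by nlinarith [h.le_p_sq, pow_pos hp 4]
  linarith [h.modeGap_le hx₀ hx, pow_pos hp 4]

lemma modeGap_sq_div_le (h : IsRescaling D R p S N B) {x : ℝ} (hx₀ : 0 ≤ x)
    (hx : x ≤ 0.172 * p) : modeGap S x ^ 2 / p ^ 6 ≤ x ^ 2 / (2 * N ^ 2) + 0.02 := by
  have hp := h.p_pos
  have hS := h.S_pos
  have hN := h.N_pos
  have hexpand : modeGap S x ^ 2 = S ^ 2 * x ^ 2 + (S * x + x ^ 2 / 4) * x ^ 2 := by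
    unfold modeGap
    ring
  have hquad : x ^ 2 / (2 * N ^ 2) = S ^ 2 * x ^ 2 / p ^ 6 := by
    rw [← h.two_mul_S_sq_mul_N_sq]
    field_simp
  have hcurvature : (S * x + x ^ 2 / 4) * x ^ 2 / p ^ 6 ≤ 0.02 := by
    rw [div_le_iff₀ (by positivity)]
    calc (S * x + x ^ 2 / 4) * x ^ 2 ≤ modeGap S x * x ^ 2 := by
          unfold modeGap
          gcongr
          norm_num
      _ ≤ 0.3 * p ^ 4 * (0.172 * p) ^ 2 := by
          gcongr
          exact h.modeGap_le hx₀ hx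
      _ ≤ 0.02 * p ^ 6 := by linarith [pow_pos hp 6]
  rw [hexpand, add_div, ← hquad]
  gcongr

lemma modeGap_exponent_le (h : IsRescaling D R p S N B) {x : ℝ} (hx₀ : 0 ≤ x)
    (hx : x ≤ 0.172 * p) :
    modeGap S x ^ 2 / (2 * (p ^ 6 / 2)) + 2 * modeGap S x ^ 3 / (p ^ 6 / 2) ^ 2 ≤
      x ^ 2 / (2 * N ^ 2) + 1 / 2 := by
  have hp := h.p_pos
  have hcubic : 2 * modeGap S x ^ 3 / (p ^ 6 / 2) ^ 2 ≤ 0.22 := by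
    rw [div_le_iff₀ (by positivity)]
    calc 2 * modeGap S x ^ 3 ≤ 2 * (0.3 * p ^ 4) ^ 3 := by
          have := modeGap_nonneg h.S_pos.le hx₀
          gcongr
          exact h.modeGap_le hx₀ hx
      _ ≤ 0.22 * (p ^ 6 / 2) ^ 2 := by linarith [pow_pos hp 12]
  rw [mul_div_cancel₀ _ two_ne_zero]
  linarith [h.modeGap_sq_div_le hx₀ hx]

/-! ### The lower bounds for `σ = 1` -/

lemma CofD_mul_exp_le_hFun (h : IsRescaling D R p S N B) {u l : ℝ} (hu : 0 ≤ u) (hl : 0 ≤ l)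
    (hx : u + l ≤ 0.172 * p) :
    CofD D * (S * l) * Real.exp (-((u + l) ^ 2 / (2 * N ^ 2) + 1 / 2)) ≤ hFun D 1 R (S + u) := by
  obtain ⟨k, hk⟩ : ∃ k, k = ((D : ℝ) - 3) / 2 := ⟨_, rfl⟩
  have hkp : k = p ^ 6 / 2 := by rw [hk, h.p_pow_six]
  have hk₀ : 0 < k := by rw [hkp]; have := h.p_pos; positivity
  have hx₀ : 0 ≤ u + l := by positivity
  have hΓ := Gamma_sub_one_half_pos (D := D) (by linarith [h.three_lt])
  have hlimit : (R ^ 2 - (S + u) ^ 2) / (2 * 1 ^ 2) = k - modeGap S u := by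
    rw [h.R_sq, hkp, modeGap]
    ring
  have hgap_u := modeGap_nonneg h.S_pos.le hu
  have hgap_x := modeGap_nonneg h.S_pos.le hx₀
  have hgap_half : modeGap S (u + l) ≤ k / 2 := by linarith [h.modeGap_le_p_pow_six hx₀ hx]
  have hslice := mul_le_modeGap_add_sub (S := S) hu hl
  have hSl := mul_nonneg h.S_pos.le hl
  calc CofD D * (S * l) * Real.exp (-((u + l) ^ 2 / (2 * N ^ 2) + 1 / 2))
      = S * l * (k ^ k * Real.exp (-k) * Real.exp (-((u + l) ^ 2 / (2 * N ^ 2) + 1 / 2))) /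
          Real.Gamma (((D : ℝ) - 1) / 2) := by
        rw [CofD, ← hk]
        ring
    _ ≤ S * l * (k ^ k * Real.exp (-k) * Real.exp (-(modeGap S (u + l) ^ 2 / (2 * k) +
          2 * modeGap S (u + l) ^ 3 / k ^ 2))) / Real.Gamma (((D : ℝ) - 1) / 2) := by
        rw [hkp]
        gcongr _ * (_ * Real.exp (-?_)) / _
        exact h.modeGap_exponent_le hx₀ hx
    _ ≤ (k - modeGap S u - (k - modeGap S (u + l))) *
          ((k - modeGap S (u + l)) ^ k * Real.exp (-(k - modeGap S (u + l)))) /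
          Real.Gamma (((D : ℝ) - 1) / 2) := by
        gcongr ?_ * ?_ / _
        · linarith
        · linarith
        · exact mul_exp_le_sub_rpow_mul_exp_neg hk₀ hgap_x hgap_half
    _ ≤ hFun D 1 R (S + u) := by
        rw [← hlimit, hk]
        exact sub_mul_div_Gamma_le_hFun (by linarith) (by linarith) (by linarith)

lemma le_gaussPdf_mul_hFun (h : IsRescaling D R p S N B) {y u : ℝ} (hBy : B ≤ y)
    (hyp : y ≤ p / 10) (hu : u ∈ Set.Icc (N ^ 2 * y / B ^ 2) (N ^ 2 * y / B ^ 2 + N / B)) :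
    CofD D * (S * (N * B / y)) * (1 / Real.sqrt (2 * Real.pi)) *
        Real.exp (-(y ^ 2 / (2 * B ^ 2) + 3)) ≤
      gaussPdf 1 (y - u) * hFun D 1 R (S + u) := by
  have hN := h.N_pos
  have hB := h.B_pos
  have hS := h.S_pos
  have hy : 0 < y := hB.trans_le hBy
  have hu₀ : 0 ≤ u := le_trans (by positivity) hu.1
  have hC := CofD_pos h.three_lt
  have hexponent := sub_sq_div_two_add_add_sq_div_le hN hB h.B_sq hBy hu
  calc CofD D * (S * (N * B / y)) * (1 / Real.sqrt (2 * Real.pi)) *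
        Real.exp (-(y ^ 2 / (2 * B ^ 2) + 3))
      ≤ CofD D * (S * (N * B / y)) * (1 / Real.sqrt (2 * Real.pi)) *
          Real.exp (-(y - u) ^ 2 / (2 * 1 ^ 2) + -((u + N * B / y) ^ 2 / (2 * N ^ 2) + 1 / 2)) := by
        gcongr
        linarith
    _ = gaussPdf 1 (y - u) * (CofD D * (S * (N * B / y)) *
          Real.exp (-((u + N * B / y) ^ 2 / (2 * N ^ 2) + 1 / 2))) := by
        rw [Real.exp_add, gaussPdf]
        ring
    _ ≤ gaussPdf 1 (y - u) * hFun D 1 R (S + u) :=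
        mul_le_mul_of_nonneg_left
          (h.CofD_mul_exp_le_hFun hu₀ (by positivity) (h.window_le hBy hyp hu.2))
          (gaussPdf_nonneg zero_le_one _)

theorem le_gaussConv_hFun (h : IsRescaling D R p S N B) {y s : ℝ} (hBy : B ≤ y) (hyp : y ≤ p / 10)
    (hs₀ : 0 ≤ s) (hs : s ≤ S + y) :
    1 / (64 * Real.exp 1) * CofD D * (S * N) * (B / y) * Real.exp (-(y ^ 2 / (2 * B ^ 2))) ≤
      gaussConv 1 (hFun D 1 R) s := by
  have hN := h.N_pos
  have hB := h.B_pos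
  have hS := h.S_pos
  have hy : 0 < y := hB.trans_le hBy
  have hC := CofD_pos h.three_lt
  have hD : 1 < D := by linarith [h.three_lt]
  set m := N ^ 2 * y / B ^ 2
  set K := CofD D * (S * (N * B / y)) * (1 / Real.sqrt (2 * Real.pi)) *
    Real.exp (-(y ^ 2 / (2 * B ^ 2) + 3)) with hK
  have hm : 0 ≤ m := by positivity
  have hwindow : ∀ v ∈ Set.Icc (y - (m + N / B)) (y - m),
      K ≤ gaussPdf 1 v * hFun D 1 R (s - v) := by
    rintro v ⟨hv₁, hv₂⟩
    have hpoint := h.le_gaussPdf_mul_hFun (u := y - v) hBy hyp ⟨by linarith, by linarith⟩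
    rw [sub_sub_cancel] at hpoint
    have habs : |s - v| ≤ |S + (y - v)| := by
      rw [abs_of_nonneg (by linarith : 0 ≤ S + (y - v)), abs_le]
      constructor <;> linarith [h.p_le_S, h.p_pos]
    exact hpoint.trans (mul_le_mul_of_nonneg_left (hFun_le_hFun_of_abs_le hD 1 R habs)
      (gaussPdf_nonneg zero_le_one v))
  calc 1 / (64 * Real.exp 1) * CofD D * (S * N) * (B / y) * Real.exp (-(y ^ 2 / (2 * B ^ 2)))
      = 1 / (64 * Real.exp 1) *
          (CofD D * (S * N) * (B / y) * Real.exp (-(y ^ 2 / (2 * B ^ 2)))) := by ring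
    _ ≤ 0.377 * (1 / Real.sqrt (2 * Real.pi)) * Real.exp (-3) *
          (CofD D * (S * N) * (B / y) * Real.exp (-(y ^ 2 / (2 * B ^ 2)))) := by
        gcongr
        exact inv_mul_exp_one_le
    _ = 0.377 * K := by
        rw [hK, neg_add, Real.exp_add]
        ring
    _ ≤ (y - m - (y - (m + N / B))) * K := by
        gcongr
        linarith [h.le_N_div_B]
    _ ≤ gaussConv 1 (hFun D 1 R) s :=
        sub_mul_le_integral_of_forall_Icc_le (integrable_gaussPdf_mul_hFun hD zero_le_one 1 R s)
          (fun v ↦ mul_nonneg (gaussPdf_nonneg zero_le_one v) (hFun_nonneg hD 1 R _))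
          (by linarith [h.le_N_div_B]) hwindow

end IsRescaling

/-! ### Rescaling to `σ = 1` -/

lemma pow_three_le_of_mul_rpow_le {c x : ℝ} (hc : 0 ≤ c) (hx : 0 < x)
    (h : c * x ^ ((2 : ℝ) / 3) ≤ x) : c ^ 3 ≤ x := by
  have hsplit : x ^ ((2 : ℝ) / 3) * x ^ ((1 : ℝ) / 3) = x := by
    rw [← Real.rpow_add hx]
    norm_num
  have hroot : c ≤ x ^ ((1 : ℝ) / 3) := by
    refine le_of_mul_le_mul_right (a := x ^ ((2 : ℝ) / 3)) ?_ (by positivity)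
    rwa [mul_comm (x ^ ((1 : ℝ) / 3)), hsplit]
  calc c ^ 3 ≤ (x ^ ((1 : ℝ) / 3)) ^ 3 := by gcongr
    _ = x := by
      rw [← Real.rpow_mul_natCast hx.le]
      norm_num

lemma pow_three_le_of_mul_rpow_le_of_le_mul {σ q x : ℝ} (hσ : 0 < σ) (hx : 0 < x)
    (hlow : 576 * Real.log 2 * σ ^ 2 * x ^ ((2 : ℝ) / 3) ≤ q) (hhigh : q ≤ 3 * σ ^ 2 * x) :
    (133 : ℝ) ^ 3 ≤ x := by
  have hlog : 133 ≤ 192 * Real.log 2 := by linarith [Real.log_two_gt_d9]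
  have hx' : 192 * Real.log 2 * x ^ ((2 : ℝ) / 3) ≤ x := by
    refine le_of_mul_le_mul_left (a := 3 * σ ^ 2) ?_ (by positivity)
    linarith
  calc (133 : ℝ) ^ 3 ≤ (192 * Real.log 2) ^ 3 := by gcongr
    _ ≤ x := pow_three_le_of_mul_rpow_le (by linarith) hx hx'

lemma rpow_one_sixth_pow_six {x : ℝ} (hx : 0 ≤ x) : (x ^ ((1 : ℝ) / 6)) ^ 6 = x := by
  rw [← Real.rpow_mul_natCast hx]
  norm_num

lemma rpow_one_sixth_pow_four {x : ℝ} (hx : 0 ≤ x) :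
    (x ^ ((1 : ℝ) / 6)) ^ 4 = x ^ ((2 : ℝ) / 3) := by
  rw [← Real.rpow_mul_natCast hx]
  norm_num

lemma isRescaling_div {D : ℕ} {σ R sstar ν νbar : ℝ} (hD : 0 < D) (hσ : 0 < σ)
    (hsstar : sstar = Real.sqrt (R ^ 2 - σ ^ 2 * ((D : ℝ) - 3)))
    (hν : ν = Real.sqrt (σ ^ 4 * ((D : ℝ) - 3) / (2 * sstar ^ 2)))
    (hνbar : νbar = Real.sqrt (ν ^ 2 + σ ^ 2))
    (hlow : 576 * Real.log 2 * σ ^ 2 * (D : ℝ) ^ ((2 : ℝ) / 3) ≤ sstar ^ 2)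
    (hhigh : sstar ^ 2 ≤ 3 * σ ^ 2 * D) :
    IsRescaling D (R / σ) (((D : ℝ) - 3) ^ ((1 : ℝ) / 6)) (sstar / σ) (ν / σ) (νbar / σ) := by
  have hD₀ : (0 : ℝ) < D := by exact_mod_cast hD
  have hD_large := pow_three_le_of_mul_rpow_le_of_le_mul hσ hD₀ hlow hhigh
  have hn : 0 < (D : ℝ) - 3 := by linarith
  have hp6 := rpow_one_sixth_pow_six hn.le
  have hS : 0 < sstar := by
    refine lt_of_le_of_ne (hsstar ▸ Real.sqrt_nonneg _) fun h0 ↦ ?_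
    have : 0 < 576 * Real.log 2 * σ ^ 2 * (D : ℝ) ^ ((2 : ℝ) / 3) := by positivity
    rw [← h0] at hlow
    linarith
  have hS_sq : sstar ^ 2 = R ^ 2 - σ ^ 2 * ((D : ℝ) - 3) := by
    rw [hsstar, Real.sq_sqrt (Real.sqrt_pos.mp (hsstar ▸ hS)).le]
  have hν_sq : ν ^ 2 = σ ^ 4 * ((D : ℝ) - 3) / (2 * sstar ^ 2) := by
    rw [hν, Real.sq_sqrt (by positivity)]
  have hνbar_sq : νbar ^ 2 = ν ^ 2 + σ ^ 2 := by rw [hνbar, Real.sq_sqrt (by positivity)]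
  have hν₀ : 0 < ν := hν ▸ Real.sqrt_pos.mpr (by positivity)
  have hνbar₀ : 0 < νbar := hνbar ▸ Real.sqrt_pos.mpr (by positivity)
  exact
    { le_p := le_of_pow_le_pow_left₀ (n := 6) (by norm_num) (by positivity) (by rw [hp6]; linarith)
      S_pos := by positivity
      N_pos := by positivity
      B_pos := by positivity
      p_pow_six := hp6
      R_sq := by rw [hp6, div_pow sstar, hS_sq]; field_simp; ring
      two_mul_S_sq_mul_N_sq := by rw [hp6, div_pow ν, hν_sq]; field_simp
      B_sq := by rw [div_pow, hνbar_sq]; field_simp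
      le_S_sq := by
        have hlog : 399 ≤ 576 * Real.log 2 := by linarith [Real.log_two_gt_d9]
        rw [div_pow, le_div_iff₀ (by positivity)]
        calc 399 * (((D : ℝ) - 3) ^ ((1 : ℝ) / 6)) ^ 4 * σ ^ 2
            ≤ 576 * Real.log 2 * (D : ℝ) ^ ((2 : ℝ) / 3) * σ ^ 2 := by
              rw [rpow_one_sixth_pow_four hn.le]
              gcongr
              linarith
          _ ≤ sstar ^ 2 := by linarith
      S_sq_le := by
        rw [div_pow, div_le_iff₀ (by positivity), hp6]
        linarith }

theorem IsRescaling.le_gaussConv_hFun_of_div {D : ℕ} {σ R p S N B y s : ℝ}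
    (h : IsRescaling D (R / σ) p (S / σ) (N / σ) (B / σ)) (hσ : 0 < σ) (hBy : B ≤ y)
    (hyp : y ≤ 1 / 10 * σ * p) (hs₀ : 0 ≤ s) (hs : s ≤ S + y) :
    1 / (64 * Real.exp 1) * CofD D * (S * N / σ ^ 2) * (B / y) *
        Real.exp (-y ^ 2 / (2 * (N ^ 2 + σ ^ 2))) ≤ gaussConv σ (hFun D σ R) s := by
  have hB_sq : N ^ 2 + σ ^ 2 = B ^ 2 := by
    have := h.B_sq
    field_simp at this
    exact this.symm
  rw [gaussConv_hFun_eq hσ]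
  convert h.le_gaussConv_hFun (y := y / σ) (s := s / σ) (by gcongr) ?_ (by positivity) ?_ using 1
  · rw [hB_sq]
    field_simp
  · rw [div_le_iff₀ hσ]
    linarith
  · rw [← add_div]
    gcongr

theorem gauss_conv_h_lower_bounds_general (D : ℕ) (hD : 0 < D) (σ R : ℝ) (hσ : 0 < σ)
    (sstar ν νbar : ℝ)
    (hsstar : sstar = Real.sqrt (R ^ 2 - σ ^ 2 * ((D : ℝ) - 3)))
    (hν : ν = Real.sqrt (σ ^ 4 * ((D : ℝ) - 3) / (2 * sstar ^ 2)))
    (hνbar : νbar = Real.sqrt (ν ^ 2 + σ ^ 2))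
    (hlow : 576 * Real.log 2 * σ ^ 2 * (D : ℝ) ^ ((2 : ℝ) / 3) ≤ sstar ^ 2)
    (hhigh : sstar ^ 2 ≤ 3 * σ ^ 2 * D) :
    (∀ s : ℝ, 0 ≤ s → s ≤ sstar + νbar →
      (1 / (64 * Real.exp 1 ^ 2)) * CofD D * (sstar * ν / σ ^ 2) ≤
        gaussConv σ (hFun D σ R) s) ∧
    (∀ s : ℝ, sstar + νbar ≤ s →
      s ≤ sstar + (1 / 12) * σ * ((D : ℝ) - 3) ^ ((1 : ℝ) / 6) →
      (1 / (64 * Real.exp 1)) * CofD D * (sstar * ν / σ ^ 2) * (νbar / (s - sstar)) *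
          Real.exp (-(s - sstar) ^ 2 / (2 * (ν ^ 2 + σ ^ 2))) ≤
        gaussConv σ (hFun D σ R) s) := by
  have h := isRescaling_div hD hσ hsstar hν hνbar hlow hhigh
  have hS : 0 < sstar := (div_pos_iff_of_pos_right hσ).mp h.S_pos
  have hν₀ : 0 < ν := (div_pos_iff_of_pos_right hσ).mp h.N_pos
  have hνbar₀ : 0 < νbar := (div_pos_iff_of_pos_right hσ).mp h.B_pos
  have hC := CofD_pos h.three_lt
  refine ⟨fun s hs₀ hs ↦ ?_, fun s hs hs' ↦ ?_⟩
  · have hνbar_le := h.B_le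
    rw [div_le_iff₀ hσ] at hνbar_le
    have hexp : -νbar ^ 2 / (2 * (ν ^ 2 + σ ^ 2)) = -(1 / 2) := by
      rw [hνbar, Real.sq_sqrt (by positivity)]
      field_simp
    calc 1 / (64 * Real.exp 1 ^ 2) * CofD D * (sstar * ν / σ ^ 2)
        = 1 / (64 * Real.exp 1) * CofD D * (sstar * ν / σ ^ 2) * (νbar / νbar) *
            Real.exp (-1) := by
          rw [Real.exp_neg]
          field_simp
      _ ≤ 1 / (64 * Real.exp 1) * CofD D * (sstar * ν / σ ^ 2) * (νbar / νbar) *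
            Real.exp (-νbar ^ 2 / (2 * (ν ^ 2 + σ ^ 2))) := by
          rw [hexp]
          gcongr
          norm_num
      _ ≤ gaussConv σ (hFun D σ R) s :=
          h.le_gaussConv_hFun_of_div hσ le_rfl (by linarith) hs₀ hs
  · exact h.le_gaussConv_hFun_of_div hσ (by linarith)
      (by nlinarith [mul_pos hσ h.p_pos]) (by linarith) (by linarith)

/-- **Lower bounds on `φ ∗ h`.**  With `s⋆ = √(R² - σ²(D-3))`,
`ν² = σ⁴(D-3)/(2s⋆²)`, `ν̄ = √(ν² + σ²)`, if `D > (576 log 2)³ + 3` and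
`576 log 2 · σ² D^(2/3) ≤ s⋆² ≤ 3σ²D`, then
(i) `[φ ∗ h](s) ≥ (1/(64e²)) C(D) s⋆ν/σ²` for `0 ≤ s ≤ s⋆ + ν̄`, and
(ii) `[φ ∗ h](s) ≥ (1/(64e)) C(D) (s⋆ν/σ²)(ν̄/(s - s⋆)) exp(-(s-s⋆)²/(2(ν²+σ²)))`
for `s⋆ + ν̄ ≤ s ≤ s⋆ + (1/12)σ(D-3)^(1/6)`. -/
theorem gauss_conv_h_lower_bounds (D : ℕ)
    (hD : (576 * Real.log 2) ^ 3 + 3 < (D : ℝ)) (σ R : ℝ)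
    (hσ : 0 < σ) (hR : 0 < R) (hRD : σ ^ 2 * ((D : ℝ) - 1) < R ^ 2)
    (sstar ν νbar : ℝ)
    (hsstar : sstar = Real.sqrt (R ^ 2 - σ ^ 2 * ((D : ℝ) - 3)))
    (hν : ν = Real.sqrt (σ ^ 4 * ((D : ℝ) - 3) / (2 * sstar ^ 2)))
    (hνbar : νbar = Real.sqrt (ν ^ 2 + σ ^ 2))
    (hlow : 576 * Real.log 2 * σ ^ 2 * (D : ℝ) ^ ((2 : ℝ) / 3) ≤ sstar ^ 2)
    (hhigh : sstar ^ 2 ≤ 3 * σ ^ 2 * D) :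
    (∀ s : ℝ, 0 ≤ s → s ≤ sstar + νbar →
      (1 / (64 * Real.exp 1 ^ 2)) * CofD D * (sstar * ν / σ ^ 2) ≤
        gaussConv σ (hFun D σ R) s) ∧
    (∀ s : ℝ, sstar + νbar ≤ s →
      s ≤ sstar + (1 / 12) * σ * ((D : ℝ) - 3) ^ ((1 : ℝ) / 6) →
      (1 / (64 * Real.exp 1)) * CofD D * (sstar * ν / σ ^ 2) * (νbar / (s - sstar)) *
          Real.exp (-(s - sstar) ^ 2 / (2 * (ν ^ 2 + σ ^ 2))) ≤
        gaussConv σ (hFun D σ R) s) := by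
  have hD₀ : (0 : ℝ) < D := lt_trans (by positivity) hD
  exact gauss_conv_h_lower_bounds_general D (mod_cast hD₀) σ R hσ sstar ν νbar hsstar hν hνbar
    hlow hhigh
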